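/- Let D ≥ 1 be an integer and f : ℝ × ℝ → ℂ a measurable function such that for every unit vector u ∈ ℝ^D the function g_u(w) = f(‖w‖², ‖w − u‖²) is Lebesgue integrable on ℝ^D. Define A(z₁, z₂) = ‖z₁‖^{−D}·f(‖z₂‖²/‖z₁‖², ‖z₂ − z₁‖²/‖z₁‖²) for z₁ ≠ 0. Then for all nonzero z₁, p₁ ∈ ℝ^D, ∫_{ℝ^D} e^{−i⟨z₂, p₁⟩} A(z₁, z₂) dz₂ = ∫_{ℝ^D} e^{−i⟨z₂, z₁⟩} A(p₁, z₂) dz₂; that is, the partial Fourier transform of A in its second argument is symmetric under exchanging the remaining position variable with the momentum variable. -/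

import Mathlib

open MeasureTheory RealInnerProductSpace

/-!
Let `c = ‖z‖ / ‖p‖`. The vectors `z` and `c • p` have the same length, so a reflection `R` exchanges
them, and the similarity `w ↦ c • R w` carries `p` to `z`. It satisfies `⟪c • R w, p⟫ = ⟪w, z⟫`, so
substituting `x = c • R w` in the Fourier integral of `A z` at `p` yields the phase of the Fourier
integral of `A p` at `z`. The Jacobian `c ^ D` cancels the factor produced by the scaling weight
of `A`, which is why the weight has to be the dimension.
-/

section Geometry

variable {E : Type*} [NormedAddCommGroup E] [InnerProductSpace ℝ E]

theorem exists_linearIsometryEquiv_swap {v w : E} (h : ‖v‖ = ‖w‖) :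
    ∃ R : E ≃ₗᵢ[ℝ] E, R v = w ∧ R w = v := by
  have hvw : (ℝ ∙ (v - w))ᗮ.reflection v = w := Submodule.reflection_sub h
  refine ⟨(ℝ ∙ (v - w))ᗮ.reflection, hvw, ?_⟩
  exact (congrArg _ hvw).symm.trans (Submodule.reflection_reflection _ v)

theorem exists_smul_linearIsometryEquiv_eq_and_inner_eq {z p : E} (hz : z ≠ 0) (hp : p ≠ 0) :
    ∃ c : ℝ, 0 < c ∧ ∃ R : E ≃ₗᵢ[ℝ] E, c • R p = z ∧ ∀ w, ⟪c • R w, p⟫ = ⟪w, z⟫ := by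
  have hp' : 0 < ‖p‖ := norm_pos_iff.mpr hp
  have hc : 0 < ‖z‖ / ‖p‖ := div_pos (norm_pos_iff.mpr hz) hp'
  have hnorm : ‖z‖ = ‖(‖z‖ / ‖p‖) • p‖ := by
    rw [norm_smul, Real.norm_of_nonneg hc.le, div_mul_cancel₀ _ hp'.ne']
  obtain ⟨R, hRz, hRp⟩ := exists_linearIsometryEquiv_swap hnorm
  refine ⟨‖z‖ / ‖p‖, hc, R, by rw [← map_smul, hRp], fun w => ?_⟩
  rw [real_inner_smul_left, ← real_inner_smul_right, ← hRz, R.inner_map_map]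

end Geometry

section ChangeOfVariables

variable {E F : Type*} [NormedAddCommGroup E] [InnerProductSpace ℝ E] [FiniteDimensional ℝ E]
  [MeasurableSpace E] [BorelSpace E] [NormedAddCommGroup F] [NormedSpace ℝ F]

theorem integral_comp_smul_linearIsometryEquiv (g : E → F) (c : ℝ) (R : E ≃ₗᵢ[ℝ] E) :
    ∫ w, g (c • R w) = |(c ^ Module.finrank ℝ E)⁻¹| • ∫ x, g x := by
  rw [R.measurePreserving.integral_comp R.toHomeomorph.measurableEmbedding (fun x => g (c • x)),
    Measure.integral_comp_smul]

end ChangeOfVariables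

section Covariance

/-- Invariance of a function of two points under simultaneous rotation of both of them. Improper
rotations are included: they too preserve all distances, and in dimension one there are no others
besides the identity. -/
def IsRotationInvariant {E F : Type*} [NormedAddCommGroup E] [NormedSpace ℝ E] (A : E → E → F) :
    Prop :=
  ∀ (R : E ≃ₗᵢ[ℝ] E) (x y : E), A (R x) (R y) = A x y

/-- A function of two points has scaling weight `n` if it is homogeneous of degree `-n` under
simultaneous dilation of both of them. -/
def HasScalingWeight {E F : Type*} [SMul ℝ E] [SMul ℝ F] (n : ℕ) (A : E → E → F) : Prop :=
  ∀ c : ℝ, 0 < c → ∀ x y : E, A (c • x) (c • y) = (c ^ n)⁻¹ • A x y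

theorem HasScalingWeight.apply_smul_linearIsometryEquiv {E F : Type*} [NormedAddCommGroup E]
    [NormedSpace ℝ E] [SMul ℝ F] {n : ℕ} {A : E → E → F} (hscale : HasScalingWeight n A)
    (hrot : IsRotationInvariant A) {c : ℝ} (hc : 0 < c) (R : E ≃ₗᵢ[ℝ] E) (x y : E) :
    A (c • R x) (c • R y) = (c ^ n)⁻¹ • A x y := by
  rw [hscale c hc, hrot R]

theorem HasScalingWeight.integrable {E F : Type*} [NormedAddCommGroup E] [NormedSpace ℝ E]
    [FiniteDimensional ℝ E] [MeasurableSpace E] [BorelSpace E] {μ : Measure E}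
    [μ.IsAddHaarMeasure] [NormedAddCommGroup F] [NormedSpace ℝ F] {n : ℕ} {A : E → E → F}
    (hscale : HasScalingWeight n A) (hint : ∀ u, ‖u‖ = 1 → Integrable (A u) μ) {z : E}
    (hz : z ≠ 0) : Integrable (A z) μ := by
  have hz' : 0 < ‖z‖ := norm_pos_iff.mpr hz
  have hunit : Integrable (A (‖z‖⁻¹ • z)) μ := hint _ (norm_smul_inv_norm (𝕜 := ℝ) hz)
  have hdilate : A z = fun x => (‖z‖ ^ n)⁻¹ • A (‖z‖⁻¹ • z) (‖z‖⁻¹ • x) := by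
    ext x
    rw [← hscale _ hz', smul_inv_smul₀ hz'.ne', smul_inv_smul₀ hz'.ne']
  rw [hdilate]
  exact (hunit.comp_smul (inv_ne_zero hz'.ne')).smul _

end Covariance

section ThreePointFunction

variable {E F : Type*} [NormedAddCommGroup E] [AddCommGroup F] [Module ℝ F]

/-- The massless three-point function of scaling weight `n` with one external point at the origin
and the other two at `z` and `x`, built from a profile `f` of the two ratios of squared
distances. -/
noncomputable def threePointFunction (n : ℕ) (f : ℝ × ℝ → F) (z x : E) : F :=
  (‖z‖ ^ n)⁻¹ • f (‖x‖ ^ 2 / ‖z‖ ^ 2, ‖x - z‖ ^ 2 / ‖z‖ ^ 2)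

theorem threePointFunction_of_norm_eq_one (n : ℕ) (f : ℝ × ℝ → F) {u : E} (hu : ‖u‖ = 1) :
    threePointFunction n f u = fun x => f (‖x‖ ^ 2, ‖x - u‖ ^ 2) := by
  ext x
  simp only [threePointFunction, hu, one_pow, inv_one, div_one, one_smul]

variable [NormedSpace ℝ E]

theorem isRotationInvariant_threePointFunction (n : ℕ) (f : ℝ × ℝ → F) :
    IsRotationInvariant (threePointFunction (E := E) n f) := fun R z x => by
  simp only [threePointFunction, ← map_sub, R.norm_map]

theorem hasScalingWeight_threePointFunction (n : ℕ) (f : ℝ × ℝ → F) :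
    HasScalingWeight n (threePointFunction (E := E) n f) := fun c hc z x => by
  have hc2 : c ^ 2 ≠ 0 := pow_ne_zero 2 hc.ne'
  simp only [threePointFunction, ← smul_sub, norm_smul, Real.norm_of_nonneg hc.le, mul_pow,
    mul_inv, mul_div_mul_left _ _ hc2, mul_smul]

end ThreePointFunction

section PartialFourier

theorem integrable_exp_inner_smul {E F : Type*} [NormedAddCommGroup E] [InnerProductSpace ℝ E]
    [MeasurableSpace E] [OpensMeasurableSpace E] [NormedAddCommGroup F] [NormedSpace ℂ F]
    {μ : Measure E} {g : E → F} (hg : Integrable g μ) (p : E) :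
    Integrable (fun x => Complex.exp (-Complex.I * ((⟪x, p⟫ : ℝ) : ℂ)) • g x) μ := by
  refine hg.bdd_smul 1 (by fun_prop) (.of_forall fun x => ?_)
  simp [Complex.norm_exp]

variable {E F : Type*} [NormedAddCommGroup E] [InnerProductSpace ℝ E] [FiniteDimensional ℝ E]
  [MeasurableSpace E] [BorelSpace E] [NormedAddCommGroup F] [NormedSpace ℂ F]

/-- The Fourier transform of `A z` at momentum `p`, in the physicists' normalization: no factor
`2 * π` in the phase and none in front of the integral. -/
noncomputable def partialFourier (A : E → E → F) (z p : E) : F :=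
  ∫ x, Complex.exp (-Complex.I * ((⟪x, p⟫ : ℝ) : ℂ)) • A z x

theorem partialFourier_comm {A : E → E → F} (hrot : IsRotationInvariant A)
    (hscale : HasScalingWeight (Module.finrank ℝ E) A) {z p : E} (hz : z ≠ 0) (hp : p ≠ 0) :
    partialFourier A z p = partialFourier A p z := by
  obtain ⟨c, hc, R, hRp, hphase⟩ := exists_smul_linearIsometryEquiv_eq_and_inner_eq hz hp
  have hA (w : E) : A z (c • R w) = (c ^ Module.finrank ℝ E)⁻¹ • A p w := by
    rw [← hRp, hscale.apply_smul_linearIsometryEquiv hrot hc]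
  have hJ : 0 < (c ^ Module.finrank ℝ E)⁻¹ := by positivity
  refine smul_right_injective F hJ.ne' ?_
  calc (c ^ Module.finrank ℝ E)⁻¹ • partialFourier A z p
      = ∫ w, Complex.exp (-Complex.I * ((⟪c • R w, p⟫ : ℝ) : ℂ)) • A z (c • R w) := by
        rw [integral_comp_smul_linearIsometryEquiv
          (fun x => Complex.exp (-Complex.I * ((⟪x, p⟫ : ℝ) : ℂ)) • A z x), abs_of_pos hJ,
          partialFourier]
    _ = ∫ w, (c ^ Module.finrank ℝ E)⁻¹ •
          Complex.exp (-Complex.I * ((⟪w, z⟫ : ℝ) : ℂ)) • A p w := by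
        congr 1 with w
        rw [hphase, hA, smul_comm]
    _ = (c ^ Module.finrank ℝ E)⁻¹ • partialFourier A p z := integral_smul _ _

theorem three_point_fourier_symmetry_general {A : E → E → F} (hrot : IsRotationInvariant A)
    (hscale : HasScalingWeight (Module.finrank ℝ E) A)
    (hint : ∀ u, ‖u‖ = 1 → Integrable (A u)) {z p : E} (hz : z ≠ 0) (hp : p ≠ 0) :
    Integrable (fun x => Complex.exp (-Complex.I * ((⟪x, p⟫ : ℝ) : ℂ)) • A z x) ∧
      partialFourier A z p = partialFourier A p z :=
  ⟨integrable_exp_inner_smul (hscale.integrable hint hz) p, partialFourier_comm hrot hscale hz hp⟩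

end PartialFourier

/-- The partial Fourier transform (in the second argument) of a
rotation-invariant massless three-point function of scaling weight `D` with one
external point at the origin is symmetric under exchanging the remaining
position variable with the momentum variable. -/
theorem three_point_fourier_symmetry
    (D : ℕ) (hD : 1 ≤ D) (f : ℝ × ℝ → ℂ) (hmeas : Measurable f)
    (hint : ∀ u : EuclideanSpace ℝ (Fin D), ‖u‖ = 1 →
      Integrable (fun w : EuclideanSpace ℝ (Fin D) => f (‖w‖ ^ 2, ‖w - u‖ ^ 2))) :
    let A : EuclideanSpace ℝ (Fin D) → EuclideanSpace ℝ (Fin D) → ℂ :=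
      fun z₁ z₂ => (((‖z₁‖ ^ D)⁻¹ : ℝ) : ℂ) *
        f (‖z₂‖ ^ 2 / ‖z₁‖ ^ 2, ‖z₂ - z₁‖ ^ 2 / ‖z₁‖ ^ 2)
    ∀ z₁ p₁ : EuclideanSpace ℝ (Fin D), z₁ ≠ 0 → p₁ ≠ 0 →
      (∫ z₂ : EuclideanSpace ℝ (Fin D),
          Complex.exp (-Complex.I * ((⟪z₂, p₁⟫ : ℝ) : ℂ)) * A z₁ z₂)
        = ∫ z₂ : EuclideanSpace ℝ (Fin D),
            Complex.exp (-Complex.I * ((⟪z₂, z₁⟫ : ℝ) : ℂ)) * A p₁ z₂ := by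
  intro A z₁ p₁ hz₁ hp₁
  have hA : A = threePointFunction (Module.finrank ℝ (EuclideanSpace ℝ (Fin D))) f := by
    ext z x
    simp only [A, threePointFunction, finrank_euclideanSpace_fin, Complex.real_smul]
  exact hA ▸ (three_point_fourier_symmetry_general (isRotationInvariant_threePointFunction _ f)
    (hasScalingWeight_threePointFunction _ f)
    (fun u hu => threePointFunction_of_norm_eq_one _ f hu ▸ hint u hu) hz₁ hp₁).2
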